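/- Let (W, S) be a Coxeter system with S finite, |S| = f, such that for all distinct s, t ∈ S the order m(s,t) of s·t is either 2 or ∞ (i.e., (W,S) is right-angled). Let e2 be the number of two-element subsets {s,t} ⊆ S with m(s,t) = 2, and let v222 be the number of three-element subsets T ⊆ S whose standard parabolic subgroup W_T is finite. Assume that for every four-element subset T ⊆ S the standard parabolic subgroup W_T is infinite. Let f_S(t) = ∑_{k≥0} a_k t^k ∈ ℤ[[t]] be the growth series of (W, S), where a_k is the number of elements w ∈ W whose word length with respect to S equals k. Then in the ring of formal power series ℤ[[t]] one has f_S(t) · ((1+t)³ − f·t·(1+t)² + e2·t²·(1+t) − v222·t³) = (1+t)³. -/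

import Mathlib

open PowerSeries

namespace CoxeterSystem

variable {B W : Type*} [Group W] {M : CoxeterMatrix B} (cs : CoxeterSystem M W)

/-- Two distinct generators of a right-angled Coxeter system commute or generate an infinite
dihedral group. -/
def _root_.CoxeterMatrix.IsRightAngled (M : CoxeterMatrix B) : Prop :=
  ∀ i j : B, i ≠ j → M i j = 2 ∨ M i j = 0

theorem simple_mul_comm {i j : B} (h : M i j = 2) :
    cs.simple i * cs.simple j = cs.simple j * cs.simple i := by
  have h2 := cs.simple_mul_simple_pow i j
  rw [h, pow_two, mul_eq_one_iff_eq_inv] at h2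
  simpa using h2

open Classical in
/-- The permutation of `W × ZMod 2` that conjugates the first coordinate by a simple reflection
and flips the second one exactly at that reflection. -/
noncomputable def signedConj (i : B) : Equiv.Perm (W × ZMod 2) :=
  Function.Involutive.toPerm
    (fun p => (cs.simple i * p.1 * cs.simple i, p.2 + if p.1 = cs.simple i then 1 else 0)) (by
      rintro ⟨t, ε⟩
      have h : cs.simple i * t * cs.simple i = cs.simple i ↔ t = cs.simple i := by
        constructor
        · intro h
          simpa [mul_assoc] using congrArg (fun x => cs.simple i * x * cs.simple i) h
        · rintro rfl; simp
      have h2 : (1 + 1 : ZMod 2) = 0 := by decide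
      ext
      · simp [mul_assoc]
      · by_cases ht : t = cs.simple i <;> simp [h, ht, add_assoc, h2])

open Classical in
theorem signedConj_apply (i : B) (t : W) (ε : ZMod 2) :
    cs.signedConj i (t, ε) =
      (cs.simple i * t * cs.simple i, ε + if t = cs.simple i then 1 else 0) := rfl

theorem signedConj_mul_self (i : B) : cs.signedConj i * cs.signedConj i = 1 :=
  Equiv.ext fun p => (Function.Involutive.toPerm_involutive _) p

theorem signedConj_commute {i j : B} (h : M i j = 2) :
    cs.signedConj i * cs.signedConj j = cs.signedConj j * cs.signedConj i := by
  classical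
  have hc := cs.simple_mul_comm h
  have conj_eq : ∀ {a b : B}, cs.simple a * cs.simple b = cs.simple b * cs.simple a → ∀ t,
      cs.simple b * t * cs.simple b = cs.simple a ↔ t = cs.simple a := by
    intro a b hab t
    constructor
    · intro ht
      have := congrArg (fun x => cs.simple b * x * cs.simple b) ht
      simpa [mul_assoc, hab] using this
    · rintro rfl
      rw [← hab]; simp
  ext1 ⟨t, ε⟩
  simp only [Equiv.Perm.mul_apply, signedConj_apply, conj_eq hc, conj_eq hc.symm]
  refine Prod.ext ?_ (by ring)
  calc cs.simple i * (cs.simple j * t * cs.simple j) * cs.simple i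
      = (cs.simple i * cs.simple j) * t * (cs.simple j * cs.simple i) := by simp only [mul_assoc]
    _ = (cs.simple j * cs.simple i) * t * (cs.simple i * cs.simple j) := by rw [hc]
    _ = _ := by simp only [mul_assoc]

theorem isLiftable_of_isRightAngled (hM : M.IsRightAngled) {G : Type*} [Monoid G] {φ : B → G}
    (hsq : ∀ i, φ i * φ i = 1) (hcomm : ∀ i j, M i j = 2 → φ i * φ j = φ j * φ i) :
    M.IsLiftable φ := by
  intro i j
  rcases eq_or_ne i j with rfl | hij
  · simp [hsq]
  · rcases hM i j hij with h | h
    · rw [h, pow_two]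
      nth_rw 2 [hcomm i j h]
      rw [mul_assoc, ← mul_assoc (φ j), hsq, one_mul, hsq]
    · simp [h]

/-- The action of `W` on `W × ZMod 2` through `signedConj`. -/
noncomputable def signedConjHom (hM : M.IsRightAngled) : W →* Equiv.Perm (W × ZMod 2) :=
  cs.lift ⟨cs.signedConj, isLiftable_of_isRightAngled hM cs.signedConj_mul_self
    fun _ _ => cs.signedConj_commute⟩

/-- The inversion cocycle: the parity of the number of times `t` occurs in the right inversion
sequence of any word representing `w`. -/
noncomputable def inversionParity (hM : M.IsRightAngled) (w t : W) : ZMod 2 :=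
  (cs.signedConjHom hM w (t, 0)).2

section Cocycle

variable (hM : M.IsRightAngled)

theorem signedConjHom_simple (i : B) : cs.signedConjHom hM (cs.simple i) = cs.signedConj i :=
  cs.lift_apply_simple _ i

theorem signedConjHom_apply (w t : W) (ε : ZMod 2) :
    cs.signedConjHom hM w (t, ε) = (w * t * w⁻¹, ε + cs.inversionParity hM w t) := by
  unfold inversionParity
  induction w using cs.simple_induction_left generalizing t ε with
  | one => simp
  | mul_simple_left w i ih =>
    simp only [map_mul, Equiv.Perm.mul_apply, signedConjHom_simple]
    rw [ih t ε, ih t 0]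
    simp only [signedConj_apply]
    ext <;> simp [mul_assoc, add_assoc]

theorem inversionParity_mul (w u t : W) :
    cs.inversionParity hM (w * u) t =
      cs.inversionParity hM u t + cs.inversionParity hM w (u * t * u⁻¹) := by
  rw [inversionParity, map_mul, Equiv.Perm.mul_apply, signedConjHom_apply, signedConjHom_apply,
    zero_add]

open Classical in
theorem inversionParity_simple (i : B) (t : W) :
    cs.inversionParity hM (cs.simple i) t = if t = cs.simple i then 1 else 0 := by
  simp [inversionParity, signedConjHom_simple, signedConj_apply]

open Classical in
theorem inversionParity_mul_simple (w t : W) (i : B) :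
    cs.inversionParity hM (w * cs.simple i) t =
      (if t = cs.simple i then 1 else 0) +
        cs.inversionParity hM w (cs.simple i * t * cs.simple i) := by
  rw [inversionParity_mul, inversionParity_simple, inv_simple]

theorem mem_rightInvSeq_of_inversionParity_ne_zero (ω : List B) (t : W)
    (h : cs.inversionParity hM (cs.wordProd ω) t ≠ 0) : t ∈ cs.rightInvSeq ω := by
  classical
  induction ω with
  | nil => simp [inversionParity] at h
  | cons i ω ih =>
    rw [wordProd_cons, inversionParity_mul, inversionParity_simple] at h
    rw [rightInvSeq, List.mem_cons]
    by_cases ht : cs.inversionParity hM (cs.wordProd ω) t = 0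
    · left
      have : cs.wordProd ω * t * (cs.wordProd ω)⁻¹ = cs.simple i := by
        by_contra hne
        simp [ht, hne] at h
      rw [← this]; group
    · exact Or.inr (ih ht)

theorem length_mul_lt_of_inversionParity_ne_zero {w t : W} (h : cs.inversionParity hM w t ≠ 0) :
    cs.length (w * t) < cs.length w := by
  obtain ⟨ω, hω, rfl⟩ := cs.exists_isReduced w
  exact (cs.isRightInversion_of_mem_rightInvSeq hω
    (cs.mem_rightInvSeq_of_inversionParity_ne_zero hM ω t h)).2

theorem isRightDescent_iff_inversionParity {w : W} {i : B} :
    cs.IsRightDescent w i ↔ cs.inversionParity hM w (cs.simple i) ≠ 0 := by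
  classical
  refine ⟨fun h h0 => ?_, cs.length_mul_lt_of_inversionParity_ne_zero hM⟩
  have := cs.length_mul_lt_of_inversionParity_ne_zero hM (w := w * cs.simple i)
    (t := cs.simple i) (by rw [inversionParity_mul_simple]; simp [h0])
  rw [simple_mul_simple_cancel_right] at this
  exact absurd h this.not_gt

end Cocycle

theorem simple_injective_of_isRightAngled (hM : M.IsRightAngled) :
    Function.Injective cs.simple := by
  classical
  intro i j hij
  by_contra hne
  have hl : M.IsLiftable fun k => Multiplicative.ofAdd (if k = i then 1 else 0 : ZMod 2) :=
    isLiftable_of_isRightAngled hM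
      (fun k => by
        rw [← ofAdd_add]
        split_ifs <;> decide)
      fun k l _ => mul_comm _ _
  have h := congrArg (cs.lift ⟨_, hl⟩) hij
  rw [lift_apply_simple, lift_apply_simple] at h
  simp [Ne.symm hne] at h

theorem isRightDescent_mul_simple_iff (hM : M.IsRightAngled) {i j : B} (hij : i ≠ j)
    (h : M i j = 2) (w : W) :
    cs.IsRightDescent (w * cs.simple j) i ↔ cs.IsRightDescent w i := by
  classical
  rw [cs.isRightDescent_iff_inversionParity hM, cs.isRightDescent_iff_inversionParity hM,
    inversionParity_mul_simple, if_neg ((cs.simple_injective_of_isRightAngled hM).ne hij),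
    zero_add, ← cs.simple_mul_comm h, simple_mul_simple_cancel_right]

/-- The reflections of the subgroup generated by two simple reflections `i` and `j`. -/
noncomputable def dihedralReflection (i j : B) (n : ℤ) : W :=
  (cs.simple j * cs.simple i) ^ n * cs.simple j

theorem exists_hom_dihedralGroup (hM : M.IsRightAngled) {i j : B} (hij : i ≠ j)
    (h : M i j = 0) : ∃ φ : W →* DihedralGroup 0,
      φ (cs.simple i) = DihedralGroup.sr 0 ∧ φ (cs.simple j) = DihedralGroup.sr 1 := by
  classical
  have hl : M.IsLiftable fun k => if k = i then DihedralGroup.sr (0 : ZMod 0) else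
      if k = j then DihedralGroup.sr 1 else 1 := by
    refine isLiftable_of_isRightAngled hM (fun k => ?_) (fun k l hkl => ?_)
    · split_ifs <;> simp
    · have hne : ¬ (k = i ∧ l = j) := by rintro ⟨rfl, rfl⟩; omega
      have hne' : ¬ (k = j ∧ l = i) := by
        rintro ⟨rfl, rfl⟩; rw [M.symmetric] at hkl; omega
      split_ifs <;> simp_all
  refine ⟨cs.lift ⟨_, hl⟩, ?_, ?_⟩ <;> rw [lift_apply_simple] <;> simp [hij.symm]

theorem zpow_simple_mul_simple_injective (hM : M.IsRightAngled) {i j : B} (hij : i ≠ j)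
    (h : M i j = 0) : Function.Injective fun n : ℤ => (cs.simple j * cs.simple i) ^ n := by
  obtain ⟨φ, hi, hj⟩ := cs.exists_hom_dihedralGroup hM hij h
  intro m n hmn
  have := congrArg φ hmn
  simp only [map_zpow, map_mul, hi, hj, DihedralGroup.sr_mul_sr, DihedralGroup.r_zpow] at this
  injection this with h1
  simp at h1
  exact_mod_cast h1

theorem dihedralReflection_injective (hM : M.IsRightAngled) {i j : B} (hij : i ≠ j)
    (h : M i j = 0) : Function.Injective (cs.dihedralReflection i j) := fun _ _ hmn =>
  cs.zpow_simple_mul_simple_injective hM hij h (mul_right_cancel hmn)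

theorem dihedralReflection_zero (i j : B) : cs.dihedralReflection i j 0 = cs.simple j := by
  simp [dihedralReflection]

theorem dihedralReflection_neg_one (i j : B) : cs.dihedralReflection i j (-1) = cs.simple i := by
  simp [dihedralReflection]

theorem simple_conj_zpow (i j : B) (n : ℤ) :
    cs.simple j * (cs.simple j * cs.simple i) ^ n * cs.simple j =
      (cs.simple j * cs.simple i) ^ (-n) := by
  have h := conj_zpow (i := n) (a := cs.simple j) (b := cs.simple j * cs.simple i)
  rw [inv_simple] at h
  rw [← h, zpow_neg, ← inv_zpow]
  simp

theorem simple_conj_dihedralReflection_right (i j : B) (n : ℤ) :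
    cs.simple j * cs.dihedralReflection i j n * cs.simple j =
      cs.dihedralReflection i j (-n) := by
  rw [dihedralReflection, dihedralReflection, ← simple_conj_zpow]
  simp only [mul_assoc]

theorem simple_conj_dihedralReflection_left (i j : B) (n : ℤ) :
    cs.simple i * cs.dihedralReflection i j n * cs.simple i =
      cs.dihedralReflection i j (-2 - n) := by
  have h := cs.simple_conj_dihedralReflection_right i j n
  have e : (cs.simple j * cs.simple i) ^ (-1 : ℤ) = cs.simple i * cs.simple j := by simp
  have e' : (cs.simple j * cs.simple i) ^ (-1 : ℤ) * cs.dihedralReflection i j (-n) *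
      (cs.simple j * cs.simple i) = cs.dihedralReflection i j (-2 - n) := by
    rw [show (-2 - n : ℤ) = -1 + (-n + -1) by ring, dihedralReflection, dihedralReflection,
      zpow_add, zpow_add, e]
    simp [mul_assoc]
  rw [← e', e, ← h]
  simp [mul_assoc]

/-- The indicator functions of the integer intervals `[0, k)` and `[-k, 0)`. -/
def IsInitialSegment (F : ℤ → ZMod 2) : Prop :=
  ∃ k : ℕ, (∀ n : ℤ, F n = if 0 ≤ n ∧ n < k then 1 else 0) ∨
    (∀ n : ℤ, F n = if -(k : ℤ) ≤ n ∧ n < 0 then 1 else 0)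

theorem IsInitialSegment.neg {F : ℤ → ZMod 2} (hF : IsInitialSegment F) :
    IsInitialSegment fun n => (if n = 0 then 1 else 0) + F (-n) := by
  obtain ⟨k, hk | hk⟩ := hF
  · rcases k with _ | k
    · refine ⟨1, Or.inl fun n => ?_⟩
      simp only [hk]
      split_ifs <;> first | omega | decide
    · refine ⟨k, Or.inr fun n => ?_⟩
      simp only [hk]
      split_ifs <;> first | omega | decide
  · refine ⟨k + 1, Or.inl fun n => ?_⟩
    simp only [hk]
    split_ifs <;> first | omega | decide

theorem IsInitialSegment.neg_two_sub {F : ℤ → ZMod 2} (hF : IsInitialSegment F) :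
    IsInitialSegment fun n => (if n = -1 then 1 else 0) + F (-2 - n) := by
  obtain ⟨k, hk | hk⟩ := hF
  · refine ⟨k + 1, Or.inr fun n => ?_⟩
    simp only [hk]
    split_ifs <;> first | omega | decide
  · rcases k with _ | k
    · refine ⟨1, Or.inr fun n => ?_⟩
      simp only [hk]
      split_ifs <;> first | omega | decide
    · refine ⟨k, Or.inl fun n => ?_⟩
      simp only [hk]
      split_ifs <;> first | omega | decide

/-- The inversions of an element among the reflections of an infinite dihedral parabolic subgroup
form an interval starting at one of the two simple reflections. -/
theorem isInitialSegment_inversionParity (hM : M.IsRightAngled) {i j : B} (hij : i ≠ j)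
    (h : M i j = 0) (w : W) :
    IsInitialSegment fun n => cs.inversionParity hM w (cs.dihedralReflection i j n) := by
  classical
  set H := Subgroup.closure {cs.simple i, cs.simple j} with hH
  have hi : cs.simple i ∈ H := Subgroup.subset_closure (by simp)
  have hj : cs.simple j ∈ H := Subgroup.subset_closure (by simp)
  have hd : ∀ n, cs.dihedralReflection i j n ∈ H := fun n =>
    H.mul_mem (H.zpow_mem (H.mul_mem hj hi) n) hj
  obtain ⟨u, v, hv, rfl, hu⟩ : ∃ u v, v ∈ H ∧ w = u * v ∧
      ∀ v ∈ H, cs.length u ≤ cs.length (u * v) := by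
    let m := Function.argmin fun v : H => cs.length (w * v)
    refine ⟨w * m, m⁻¹, H.inv_mem m.2, by simp, fun v' hv' => ?_⟩
    simpa [mul_assoc] using
      Function.argmin_le (fun v : H => cs.length (w * v)) (m * ⟨v', hv'⟩)
  have heqi : ∀ n, cs.dihedralReflection i j n = cs.simple i ↔ n = -1 := fun n => by
    rw [← cs.dihedralReflection_neg_one i j,
      (cs.dihedralReflection_injective hM hij h).eq_iff]
  have heqj : ∀ n, cs.dihedralReflection i j n = cs.simple j ↔ n = 0 := fun n => by
    rw [← cs.dihedralReflection_zero i j,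
      (cs.dihedralReflection_injective hM hij h).eq_iff]
  have step : ∀ v x, x ∈ ({cs.simple i, cs.simple j} : Set W) →
      IsInitialSegment (fun n => cs.inversionParity hM v (cs.dihedralReflection i j n)) →
      IsInitialSegment fun n => cs.inversionParity hM (v * x) (cs.dihedralReflection i j n) := by
    rintro v x (rfl | rfl) hv
    · simpa only [inversionParity_mul_simple, simple_conj_dihedralReflection_left,
        heqi] using hv.neg_two_sub
    · simpa only [inversionParity_mul_simple, simple_conj_dihedralReflection_right,
        heqj] using hv.neg
  induction hv using Subgroup.closure_induction_right with
  | one =>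
    refine ⟨0, Or.inl fun n => ?_⟩
    rw [mul_one, if_neg (by simp)]
    by_contra hn
    exact (cs.length_mul_lt_of_inversionParity_ne_zero hM hn).not_ge (hu _ (hd n))
  | mul_right v _ x hx ih => rw [← mul_assoc]; exact step _ _ hx ih
  | mul_inv_cancel v _ x hx ih =>
    rw [← mul_assoc]
    refine step _ _ ?_ ih
    rcases hx with rfl | rfl <;> simp

theorem matrix_eq_two_of_isRightDescent (hM : M.IsRightAngled) {w : W} {i j : B} (hij : i ≠ j)
    (hi : cs.IsRightDescent w i) (hj : cs.IsRightDescent w j) : M i j = 2 := by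
  refine (hM i j hij).resolve_right fun h => ?_
  rw [cs.isRightDescent_iff_inversionParity hM] at hi hj
  rw [← cs.dihedralReflection_neg_one i j] at hi
  rw [← cs.dihedralReflection_zero i j] at hj
  obtain ⟨k, hk | hk⟩ := cs.isInitialSegment_inversionParity hM hij h w
  · simp [hk] at hi
  · simp [hk] at hj

theorem infinite_closure_of_matrix_eq_zero (hM : M.IsRightAngled) {i j : B} (hij : i ≠ j)
    (h : M i j = 0) {T : Set B} (hi : i ∈ T) (hj : j ∈ T) :
    Infinite (Subgroup.closure (cs.simple '' T)) :=
  have mem : ∀ k ∈ T, cs.simple k ∈ Subgroup.closure (cs.simple '' T) := fun _ hk =>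
    Subgroup.subset_closure (Set.mem_image_of_mem _ hk)
  Infinite.of_injective
    (fun n : ℤ => (⟨_, zpow_mem (mul_mem (mem j hj) (mem i hi)) n⟩ :
      Subgroup.closure (cs.simple '' T)))
    fun _ _ hmn => cs.zpow_simple_mul_simple_injective hM hij h (congrArg Subtype.val hmn)

open scoped IsMulCommutative in
theorem finite_closure_of_pairwise {T : Set B} (hfin : T.Finite)
    (hT : ∀ i ∈ T, ∀ j ∈ T, i ≠ j → M i j = 2) :
    Finite (Subgroup.closure (cs.simple '' T)) := by
  have hcomm : ∀ x ∈ cs.simple '' T, ∀ y ∈ cs.simple '' T, x * y = y * x := by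
    rintro _ ⟨i, hi, rfl⟩ _ ⟨j, hj, rfl⟩
    rcases eq_or_ne i j with rfl | hij
    · rfl
    · exact cs.simple_mul_comm (hT i hi j hj hij)
  have := Subgroup.isMulCommutative_closure hcomm
  have hfg : Group.FG (Subgroup.closure (cs.simple '' T)) :=
    (Group.fg_iff_subgroup_fg _).2 ((Subgroup.fg_iff _).2 ⟨_, rfl, hfin.image _⟩)
  refine CommGroup.finite_of_fg_isMulTorsion _ fun x =>
    isOfFinOrder_iff_pow_eq_one.2 ⟨2, two_pos, Subtype.ext ?_⟩
  obtain ⟨x, hx⟩ := x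
  change x ^ 2 = 1
  induction hx using Subgroup.closure_induction with
  | mem x hx => obtain ⟨i, -, rfl⟩ := hx; exact cs.simple_sq i
  | one => exact one_pow 2
  | mul x y hx hy ihx ihy =>
    have hxy : Commute x y := congrArg Subtype.val
      (mul_comm (⟨x, hx⟩ : Subgroup.closure (cs.simple '' T)) ⟨y, hy⟩)
    rw [hxy.mul_pow, ihx, ihy, one_mul]
  | inv x hx ih => rw [inv_pow, ih, inv_one]

theorem finite_closure_iff (hM : M.IsRightAngled) {T : Set B} (hfin : T.Finite) :
    Finite (Subgroup.closure (cs.simple '' T)) ↔ ∀ i ∈ T, ∀ j ∈ T, i ≠ j → M i j = 2 := by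
  refine ⟨fun h i hi j hj hij => (hM i j hij).resolve_right fun h0 => ?_,
    cs.finite_closure_of_pairwise hfin⟩
  have := cs.infinite_closure_of_matrix_eq_zero hM hij h0 hi hj
  exact not_finite (Subgroup.closure (cs.simple '' T))

section Growth

variable [Fintype B]

theorem finite_length_eq (n : ℕ) : {w : W | cs.length w = n}.Finite := by
  refine ((List.finite_length_eq B n).image cs.wordProd).subset fun w hw => ?_
  obtain ⟨ω, hω, rfl⟩ := cs.exists_isReduced w
  exact ⟨ω, hω.symm.trans hw, rfl⟩

/-- The elements of length `n`. -/
noncomputable def sphere (n : ℕ) : Finset W := (cs.finite_length_eq n).toFinset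

theorem mem_sphere {n : ℕ} {w : W} : w ∈ cs.sphere n ↔ cs.length w = n := by
  simp [sphere]

open Classical in
/-- The set of right descents of `w`. -/
noncomputable def rightDescents (w : W) : Finset B := {i | cs.IsRightDescent w i}

theorem mem_rightDescents {w : W} {i : B} : i ∈ cs.rightDescents w ↔ cs.IsRightDescent w i := by
  simp [rightDescents]

open Classical in
/-- The generating function by length of the elements having all elements of `T` as right
descents. -/
noncomputable def descentSeries (T : Finset B) : PowerSeries ℤ :=
  PowerSeries.mk fun n => (({w ∈ cs.sphere n | T ⊆ cs.rightDescents w}.card : ℕ) : ℤ)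

theorem descentSeries_empty :
    cs.descentSeries ∅ =
      PowerSeries.mk fun n => ({w : W | cs.length w = n}.ncard : ℤ) := by
  ext n
  simp [descentSeries, sphere, Set.ncard_eq_toFinset_card _ (cs.finite_length_eq n)]

theorem subset_rightDescents_mul_simple_iff (hM : M.IsRightAngled) {T : Finset B} {s : B}
    (hs : s ∉ T) (hT : ∀ i ∈ T, M i s = 2) (w : W) :
    T ⊆ cs.rightDescents (w * cs.simple s) ↔ T ⊆ cs.rightDescents w := by
  refine forall₂_congr fun i hi => ?_
  rw [mem_rightDescents, mem_rightDescents]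
  exact cs.isRightDescent_mul_simple_iff hM (ne_of_mem_of_not_mem hi hs) (hT i hi) w

open Classical in
theorem descentSeries_insert (hM : M.IsRightAngled) {T : Finset B} {s : B}
    (hs : s ∉ T) (hT : ∀ i ∈ T, M i s = 2) :
    (1 + X) * cs.descentSeries (insert s T) = X * cs.descentSeries T := by
  have key := cs.subset_rightDescents_mul_simple_iff hM hs hT
  ext n
  rw [add_mul, one_mul, map_add]
  rcases n with _ | n
  · simp only [coeff_zero_X_mul, add_zero, descentSeries, coeff_mk]
    rw [Nat.cast_eq_zero, Finset.card_eq_zero, Finset.filter_eq_empty_iff]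
    intro w hw h
    have hd := cs.mem_rightDescents.1 (h (Finset.mem_insert_self s T))
    rw [mem_sphere] at hw
    unfold IsRightDescent at hd
    omega
  · simp only [coeff_succ_X_mul, descentSeries, coeff_mk]
    have hbij : {w ∈ cs.sphere (n + 1) | insert s T ⊆ cs.rightDescents w}.card =
        {w ∈ cs.sphere n | T ⊆ cs.rightDescents w ∧ ¬ s ∈ cs.rightDescents w}.card := by
      refine Finset.card_nbij' (· * cs.simple s) (· * cs.simple s) ?_ ?_ ?_ ?_
      · intro w hw
        simp only [Finset.coe_filter, Set.mem_ofPred_eq, mem_sphere, Finset.insert_subset_iff,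
          mem_rightDescents, key] at hw ⊢
        have h1 := cs.isRightDescent_iff.1 hw.2.1
        exact ⟨by omega, hw.2.2, cs.isRightDescent_iff_not_isRightDescent_mul.1 hw.2.1⟩
      · intro w hw
        simp only [Finset.coe_filter, Set.mem_ofPred_eq, mem_sphere, Finset.insert_subset_iff,
          mem_rightDescents, key] at hw ⊢
        have h1 := cs.not_isRightDescent_iff.1 hw.2.2
        refine ⟨by omega, cs.isRightDescent_iff_not_isRightDescent_mul.2 ?_, hw.2.1⟩
        rw [simple_mul_simple_cancel_right]; exact hw.2.2
      · intro w _; simp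
      · intro w _; simp
    rw [hbij, ← Finset.card_filter_add_card_filter_not
      (s := {w ∈ cs.sphere n | T ⊆ cs.rightDescents w})
      (fun w => s ∈ cs.rightDescents w), Finset.filter_filter, Finset.filter_filter]
    simp only [Finset.insert_subset_iff]
    push_cast
    rw [add_comm]
    simp only [and_comm]

theorem one_add_X_pow_mul_descentSeries (hM : M.IsRightAngled) {T : Finset B}
    (hT : ∀ i ∈ T, ∀ j ∈ T, i ≠ j → M i j = 2) :
    (1 + X) ^ T.card * cs.descentSeries T = X ^ T.card * cs.descentSeries ∅ := by
  classical
  induction T using Finset.induction_on with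
  | empty => simp
  | insert s T hs ih =>
    have h1 := cs.descentSeries_insert hM hs fun i hi =>
      hT i (by simp [hi]) s (by simp) (ne_of_mem_of_not_mem hi hs)
    have h2 := ih fun i hi j hj => hT i (by simp [hi]) j (by simp [hj])
    rw [Finset.card_insert_of_notMem hs, pow_succ, mul_assoc, h1, pow_succ]
    linear_combination X * h2

open Classical in
/-- The finsets of pairwise commuting generators. -/
noncomputable def _root_.CoxeterMatrix.cliques (M : CoxeterMatrix B) : Finset (Finset B) :=
  {T | ∀ i ∈ T, ∀ j ∈ T, i ≠ j → M i j = 2}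

theorem _root_.CoxeterMatrix.mem_cliques {T : Finset B} :
    T ∈ M.cliques ↔ ∀ i ∈ T, ∀ j ∈ T, i ≠ j → M i j = 2 := by
  simp [CoxeterMatrix.cliques]

theorem sum_cliques_descentSeries (hM : M.IsRightAngled) :
    ∑ T ∈ M.cliques, (-1) ^ T.card * cs.descentSeries T = 1 := by
  classical
  ext n
  have hcoeff : ∀ T : Finset B, coeff n ((-1) ^ T.card * cs.descentSeries T) =
      ∑ w ∈ cs.sphere n, if T ⊆ cs.rightDescents w then (-1 : ℤ) ^ T.card else 0 := by
    intro T
    rw [show (-1 : PowerSeries ℤ) ^ T.card = C ((-1) ^ T.card) by simp, coeff_C_mul,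
      descentSeries, coeff_mk, ← Finset.sum_filter, Finset.sum_const, nsmul_eq_mul, mul_comm]
  have hw : ∀ w : W, (∑ T ∈ M.cliques, if T ⊆ cs.rightDescents w then (-1 : ℤ) ^ T.card else 0) =
      if w = 1 then 1 else 0 := by
    intro w
    rw [← Finset.sum_filter]
    have : {T ∈ M.cliques | T ⊆ cs.rightDescents w} = (cs.rightDescents w).powerset := by
      ext T
      simp only [Finset.mem_filter, Finset.mem_powerset, and_iff_right_iff_imp,
        CoxeterMatrix.mem_cliques]
      exact fun h i hi j hj hij => cs.matrix_eq_two_of_isRightDescent hM hij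
        (cs.mem_rightDescents.1 (h hi)) (cs.mem_rightDescents.1 (h hj))
    rw [this, Finset.sum_powerset_neg_one_pow_card]
    congr 1
    rw [eq_iff_iff, Finset.eq_empty_iff_forall_notMem]
    simp only [mem_rightDescents]
    refine ⟨fun h => ?_, by rintro rfl; exact cs.not_isRightDescent_one⟩
    by_contra hne
    obtain ⟨i, hi⟩ := cs.exists_rightDescent_of_ne_one hne
    exact h i hi
  rw [map_sum, Finset.sum_congr rfl fun T _ => hcoeff T, Finset.sum_comm,
    Finset.sum_congr rfl fun w _ => hw w, Finset.sum_ite_eq', coeff_one]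
  simp only [mem_sphere, length_one, eq_comm]

/-- Steinberg's formula for right-angled Coxeter systems whose finite standard parabolic subgroups
have rank at most `d`. -/
theorem descentSeries_empty_mul_sum_cliques (hM : M.IsRightAngled) {d : ℕ}
    (hd : ∀ T ∈ M.cliques, T.card ≤ d) :
    cs.descentSeries ∅ * ∑ k ∈ Finset.range (d + 1),
      ((M.cliques.filter fun T => T.card = k).card : PowerSeries ℤ) *
        ((-X) ^ k * (1 + X) ^ (d - k)) = (1 + X) ^ d := by
  have hsum : ∑ k ∈ Finset.range (d + 1),
      ((M.cliques.filter fun T => T.card = k).card : PowerSeries ℤ) *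
        ((-X) ^ k * (1 + X) ^ (d - k)) =
      ∑ T ∈ M.cliques, (-X) ^ T.card * (1 + X) ^ (d - T.card) := by
    rw [← Finset.sum_fiberwise_of_maps_to (s := M.cliques) (t := Finset.range (d + 1))
      (g := Finset.card) fun T hT => Finset.mem_range.2 (Nat.lt_succ_of_le (hd T hT))]
    refine Finset.sum_congr rfl fun k _ => ?_
    rw [Finset.sum_congr rfl (g := fun _ => (-X) ^ k * (1 + X) ^ (d - k)) fun T hT => by
      rw [(Finset.mem_filter.1 hT).2], Finset.sum_const, nsmul_eq_mul]
  refine Eq.trans ?_ ((congrArg _ (cs.sum_cliques_descentSeries hM)).trans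
    (mul_one ((1 + X) ^ d)))
  rw [hsum, Finset.mul_sum, Finset.mul_sum]
  refine Finset.sum_congr rfl fun T hT => ?_
  have h := cs.one_add_X_pow_mul_descentSeries hM (CoxeterMatrix.mem_cliques.1 hT)
  obtain ⟨e, rfl⟩ := Nat.exists_eq_add_of_le (hd T hT)
  rw [Nat.add_sub_cancel_left, neg_pow, pow_add]
  linear_combination (-(-1) ^ T.card * (1 + X) ^ e) * h

end Growth

end CoxeterSystem

/-- Steinberg's formula for a right-angled Coxeter system `(W, S)` with `|S| = f`
whose finite standard parabolic subgroups have rank at most `3`: if `e2` is the number of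
commuting pairs of generators and `v222` the number of `3`-element subsets generating a finite
subgroup, then the growth series `f_S(t)` satisfies
`f_S(t) · ((1+t)³ − f·t·(1+t)² + e2·t²·(1+t) − v222·t³) = (1+t)³` in `ℤ⟦t⟧`. -/
theorem right_angled_rank3_steinberg_formula
    {B : Type*} [Fintype B] {W : Type*} [Group W]
    {M : CoxeterMatrix B} (cs : CoxeterSystem M W)
    (hra : ∀ i j : B, i ≠ j → M i j = 2 ∨ M i j = 0)
    (f e2 v222 : ℕ)
    (hf : Fintype.card B = f)
    (he2 : Set.ncard {T : Finset B | T.card = 2 ∧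
        ∀ i ∈ T, ∀ j ∈ T, i ≠ j → M i j = 2} = e2)
    (hv222 : Set.ncard {T : Finset B | T.card = 3 ∧
        Finite ↥(Subgroup.closure (cs.simple '' (T : Set B)))} = v222)
    (h4 : ∀ T : Finset B, T.card = 4 →
        Infinite ↥(Subgroup.closure (cs.simple '' (T : Set B)))) :
    (PowerSeries.mk fun k => (Set.ncard {w : W | cs.length w = k} : ℤ)) *
        ((1 + X) ^ 3 - (f : PowerSeries ℤ) * X * (1 + X) ^ 2
          + (e2 : PowerSeries ℤ) * X ^ 2 * (1 + X)
          - (v222 : PowerSeries ℤ) * X ^ 3)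
      = (1 + X) ^ 3 := by
  have hM : M.IsRightAngled := hra
  have hcard : ∀ k, ((M.cliques.filter fun T => T.card = k).card) =
      Set.ncard {T : Finset B | T.card = k ∧ ∀ i ∈ T, ∀ j ∈ T, i ≠ j → M i j = 2} := by
    intro k
    rw [← Set.ncard_coe_finset]
    congr 1
    ext T
    simp [CoxeterMatrix.mem_cliques, and_comm]
  have hfin := fun T : Finset B => cs.finite_closure_iff hM T.finite_toSet
  have hd : ∀ T ∈ M.cliques, T.card ≤ 3 := by
    intro T hT
    by_contra! hlt
    obtain ⟨U, hUT, hU⟩ := Finset.exists_subset_card_eq (Nat.succ_le_of_lt hlt)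
    have := h4 U hU
    have := (hfin U).2 fun i hi j hj =>
      CoxeterMatrix.mem_cliques.1 hT i (hUT hi) j (hUT hj)
    exact not_finite (Subgroup.closure (cs.simple '' (U : Set B)))
  have h0 : (M.cliques.filter fun T => T.card = 0).card = 1 := by
    rw [Finset.card_eq_one]
    refine ⟨∅, ?_⟩
    ext T
    simp only [Finset.mem_filter, Finset.card_eq_zero, Finset.mem_singleton,
      and_iff_right_iff_imp, CoxeterMatrix.mem_cliques]
    rintro rfl
    simp
  have h1 : (M.cliques.filter fun T => T.card = 1).card = f := by
    rw [← hf, ← Finset.card_univ, ← Nat.choose_one_right Finset.univ.card,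
      ← Finset.card_powersetCard]
    congr 1
    ext T
    simp only [Finset.mem_filter, Finset.mem_powersetCard, Finset.subset_univ, true_and,
      and_iff_right_iff_imp, CoxeterMatrix.mem_cliques]
    intro hT i hi j hj hij
    exact absurd (Finset.card_le_one.1 hT.le i hi j hj) hij
  have h2 : (M.cliques.filter fun T => T.card = 2).card = e2 := (hcard 2).trans he2
  have h3 : (M.cliques.filter fun T => T.card = 3).card = v222 := by
    rw [hcard, ← hv222]
    simp only [hfin, Finset.mem_coe]
  have key := cs.descentSeries_empty_mul_sum_cliques hM hd
  simp only [Finset.sum_range_succ, Finset.sum_range_zero, h0, h1, h2, h3,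
    cs.descentSeries_empty] at key
  refine Eq.trans (congrArg _ ?_) key
  norm_num
  ring
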